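/- arXiv:2311.03241 — 2 statements merged into one kernel-verified Lean document; each statement's English description precedes it below -/
import Mathlib

section
/- Suppose η is continuously differentiable on a neighborhood of b > 0. Then for every fixed x ≥ 0 with x ≠ b, the map c ↦ v_c(x) is differentiable at c = b, and its derivative equals (φ(x)/φ'(b)²)·(η'(b)φ'(b) − η(b)φ''(b)) when x < b, and equals (φ(b)/φ'(b)²)·(η'(b)φ'(b) − η(b)φ''(b)) when x > b. -/
/-!
Write `κ = η / φ'`. Below the barrier `v_c(x) = κ(c) φ(x)`, and above it
`v_c(x) = κ(c) φ(c) + ∫_c^x η`. In the second case the term `κ φ' = η` of the product rule cancels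
the derivative `-η(c)` of the integral, so in both cases the derivative at `c = b` is
`κ'(b) φ(min x b)`.
-/

open MeasureTheory Set Topology

theorem hasDerivAt_integral_left_of_locallyIntegrableOn {E : Type*} [NormedAddCommGroup E]
    [NormedSpace ℝ E] [CompleteSpace E] {f : ℝ → E} {s : Set ℝ} [s.OrdConnected] {b x : ℝ}
    (hf : LocallyIntegrableOn f s) (hs : s ∈ 𝓝 b) (hx : x ∈ s) (hb : ContinuousAt f b) :
    HasDerivAt (fun c => ∫ u in c..x, f u) (-f b) b := by
  have hint : IntervalIntegrable f volume b x :=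
    (hf.integrableOn_compact_subset (OrdConnected.uIcc_subset ‹_› (mem_of_mem_nhds hs) hx)
      isCompact_uIcc).intervalIntegrable
  exact intervalIntegral.integral_hasDerivAt_left hint ⟨s, hs, hf.aestronglyMeasurable⟩ hb

theorem hasDerivAt_mul_add_integral {κ φ η : ℝ → ℝ} {κ' φ' b x : ℝ} {s : Set ℝ} [s.OrdConnected]
    (hκ : HasDerivAt κ κ' b) (hφ : HasDerivAt φ φ' b) (hκφ : κ b * φ' = η b)
    (hη : LocallyIntegrableOn η s) (hs : s ∈ 𝓝 b) (hx : x ∈ s) (hηb : ContinuousAt η b) :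
    HasDerivAt (fun c => κ c * φ c + ∫ u in c..x, η u) (κ' * φ b) b := by
  have h := (hκ.fun_mul hφ).fun_add (hasDerivAt_integral_left_of_locallyIntegrableOn hη hs hx hηb)
  rwa [hκφ, add_neg_cancel_right] at h

/-- The value function `v_c` of the strategy with barrier at level `c`: a multiple of `φ` up to `c`,
scaled so that the slope at `c` is `η c`, and a primitive of `η` from there on. -/
noncomputable def barrierValue (φ η : ℝ → ℝ) (c x : ℝ) : ℝ :=
  if x ≤ c then η c / deriv φ c * φ x else η c * φ c / deriv φ c + ∫ u in c..x, η u

section BarrierValue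

variable {φ η : ℝ → ℝ} {b x : ℝ}

theorem barrierValue_of_le {c : ℝ} (h : x ≤ c) :
    barrierValue φ η c x = η c / deriv φ c * φ x :=
  if_pos h

theorem barrierValue_of_lt {c : ℝ} (h : c < x) :
    barrierValue φ η c x = η c / deriv φ c * φ c + ∫ u in c..x, η u := by
  rw [barrierValue, if_neg h.not_ge, div_mul_eq_mul_div]

theorem hasDerivAt_barrierValue {s : Set ℝ} [s.OrdConnected] (hs : s ∈ 𝓝 b)
    (hφ : deriv φ b ≠ 0) (hφ' : DifferentiableAt ℝ (deriv φ) b)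
    (hη : LocallyIntegrableOn η s) (hηb : DifferentiableAt ℝ η b) (hx : x ∈ s) (hxb : x ≠ b) :
    HasDerivAt (fun c => barrierValue φ η c x)
      (φ (min x b) / deriv φ b ^ 2 * (deriv η b * deriv φ b - η b * deriv (deriv φ) b)) b := by
  have hκ : HasDerivAt (fun c => η c / deriv φ c)
      ((deriv η b * deriv φ b - η b * deriv (deriv φ) b) / deriv φ b ^ 2) b :=
    hηb.hasDerivAt.fun_div hφ'.hasDerivAt hφ
  rw [div_mul_comm]
  rcases hxb.lt_or_gt with hlt | hgt
  · rw [min_eq_left hlt.le]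
    refine (hκ.mul_const (φ x)).congr_of_eventuallyEq ?_
    filter_upwards [lt_mem_nhds hlt] with c hc using barrierValue_of_le hc.le
  · rw [min_eq_right hgt.le]
    have hφb : HasDerivAt φ (deriv φ b) b := (differentiableAt_of_deriv_ne_zero hφ).hasDerivAt
    refine (hasDerivAt_mul_add_integral hκ hφb (div_mul_cancel₀ _ hφ) hη hs hx
      hηb.continuousAt).congr_of_eventuallyEq ?_
    filter_upwards [gt_mem_nhds hgt] with c hc using barrierValue_of_lt hc

end BarrierValue

/-- For `p` and `q` the roots of `σ² γ² / 2 + μ γ = r`, the solution `f` of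
`σ² f'' / 2 + μ f' = r f` with `f' 0 = 0`, the boundary condition of reflection at `0`,
normalized by `f'' 0 = p - q`. -/
noncomputable def reflectedSolution (p q x : ℝ) : ℝ :=
  Real.exp (p * x) / p - Real.exp (q * x) / q

section ReflectedSolution

variable {p q : ℝ}

theorem differentiable_deriv_reflectedSolution :
    Differentiable ℝ (deriv (reflectedSolution p q)) := by
  have h : ContDiff ℝ 2 (reflectedSolution p q) := by
    unfold reflectedSolution
    fun_prop
  exact h.differentiable_deriv_two

theorem deriv_reflectedSolution (hp : p ≠ 0) (hq : q ≠ 0) (x : ℝ) :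
    deriv (reflectedSolution p q) x = Real.exp (p * x) - Real.exp (q * x) := by
  have hexp {k : ℝ} (hk : k ≠ 0) :
      HasDerivAt (fun y => Real.exp (k * y) / k) (Real.exp (k * x)) x := by
    simpa [hk] using (((hasDerivAt_id x).const_mul k).exp).div_const k
  exact ((hexp hp).fun_sub (hexp hq)).deriv

theorem deriv_reflectedSolution_ne_zero (hp : p ≠ 0) (hq : q ≠ 0) (hpq : p ≠ q) {x : ℝ}
    (hx : x ≠ 0) : deriv (reflectedSolution p q) x ≠ 0 := by
  rw [deriv_reflectedSolution hp hq]
  exact sub_ne_zero.2 (Real.exp_injective.ne ((mul_left_injective₀ hx).ne hpq))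

end ReflectedSolution

section CharacteristicRoots

variable {μ σ r : ℝ}

theorem abs_lt_sqrt_discriminant (hσ : σ ≠ 0) (hr : 0 < r) :
    |μ| < √(μ ^ 2 + 2 * r * σ ^ 2) :=
  Real.lt_sqrt_of_sq_lt <| by
    rw [sq_abs]
    exact lt_add_of_pos_right _ (by positivity)

theorem characteristicRoot_pos (hσ : σ ≠ 0) (hr : 0 < r) :
    0 < (-μ + √(μ ^ 2 + 2 * r * σ ^ 2)) / σ ^ 2 :=
  div_pos (by linarith [le_abs_self μ, abs_lt_sqrt_discriminant (μ := μ) hσ hr])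
    (by positivity)

theorem characteristicRoot_neg (hσ : σ ≠ 0) (hr : 0 < r) :
    (-μ - √(μ ^ 2 + 2 * r * σ ^ 2)) / σ ^ 2 < 0 :=
  div_neg_of_neg_of_pos (by linarith [neg_abs_le μ, abs_lt_sqrt_discriminant (μ := μ) hσ hr])
    (by positivity)

end CharacteristicRoots

theorem stmt5_general {s : Set ℝ} [s.OrdConnected] {b : ℝ} (hs : s ∈ 𝓝 b) {φ η : ℝ → ℝ}
    (hφ : deriv φ b ≠ 0) (hφ' : DifferentiableAt ℝ (deriv φ) b)
    (hη : LocallyIntegrableOn η s) (hηb : DifferentiableAt ℝ η b) :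
    ∀ x ∈ s, x ≠ b →
      DifferentiableAt ℝ (fun c => barrierValue φ η c x) b ∧
      (x < b → deriv (fun c => barrierValue φ η c x) b =
        φ x / (deriv φ b) ^ 2 * (deriv η b * deriv φ b - η b * deriv (deriv φ) b)) ∧
      (b < x → deriv (fun c => barrierValue φ η c x) b =
        φ b / (deriv φ b) ^ 2 * (deriv η b * deriv φ b - η b * deriv (deriv φ) b)) := by
  intro x hx hxb
  have h := hasDerivAt_barrierValue hs hφ hφ' hη hηb hx hxb
  refine ⟨h.differentiableAt, fun hlt => ?_, fun hgt => ?_⟩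
  · rw [h.deriv, min_eq_left hlt.le]
  · rw [h.deriv, min_eq_right hgt.le]

/-- If `η` is `C¹` on a neighborhood of `b > 0`, then for every fixed `x ≥ 0` with `x ≠ b`,
the map `c ↦ v_c(x)` is differentiable at `c = b`, with derivative
`(φ(x)/φ'(b)²)·(η'(b)φ'(b) − η(b)φ''(b))` when `x < b` and
`(φ(b)/φ'(b)²)·(η'(b)φ'(b) − η(b)φ''(b))` when `x > b`. -/
theorem stmt5 (μ σ r : ℝ) (hσ : 0 < σ) (hr : 0 < r)
    (γp γm : ℝ)
    (hγp : γp = (-μ + Real.sqrt (μ ^ 2 + 2 * r * σ ^ 2)) / σ ^ 2)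
    (hγm : γm = (-μ - Real.sqrt (μ ^ 2 + 2 * r * σ ^ 2)) / σ ^ 2)
    (φ : ℝ → ℝ)
    (hφ : ∀ x, φ x = Real.exp (γp * x) / γp - Real.exp (γm * x) / γm)
    (η : ℝ → ℝ) (hη : ContinuousOn η (Set.Ici 0))
    (b : ℝ) (hb : 0 < b)
    (hη1 : ∃ U ∈ nhds b, ContDiffOn ℝ 1 η U)
    (V : ℝ → ℝ → ℝ)
    (hV : ∀ c x : ℝ, V c x =
      if x ≤ c then (η c / deriv φ c) * φ x
      else η c * φ c / deriv φ c + ∫ u in c..x, η u) :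
    ∀ x : ℝ, 0 ≤ x → x ≠ b →
      DifferentiableAt ℝ (fun c => V c x) b ∧
      (x < b → deriv (fun c => V c x) b =
        φ x / (deriv φ b) ^ 2 * (deriv η b * deriv φ b - η b * deriv (deriv φ) b)) ∧
      (b < x → deriv (fun c => V c x) b =
        φ b / (deriv φ b) ^ 2 * (deriv η b * deriv φ b - η b * deriv (deriv φ) b)) := by
  obtain rfl : φ = reflectedSolution γp γm := funext hφ
  obtain rfl : V = barrierValue (reflectedSolution γp γm) η := funext₂ hV
  obtain ⟨U, hU, hηU⟩ := hη1
  have hp : 0 < γp := hγp ▸ characteristicRoot_pos hσ.ne' hr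
  have hm : γm < 0 := hγm ▸ characteristicRoot_neg hσ.ne' hr
  exact stmt5_general (Ici_mem_nhds hb)
    (deriv_reflectedSolution_ne_zero hp.ne' hm.ne (hm.trans hp).ne' hb.ne')
    (differentiable_deriv_reflectedSolution b) (hη.locallyIntegrableOn measurableSet_Ici)
    ((hηU.contDiffAt hU).differentiableAt one_ne_zero)
end

section
/- For the parameter values σ = √2, μ = 0.508378, r = 0.00520074, and for any b₁ ∈ (4.18, 4.19) satisfying the smooth-fit equation b₁² − b₁ = (e^{γ₊b₁} − e^{γ₋b₁})/(γ₊e^{γ₊b₁} − γ₋e^{γ₋b₁}), there exist real constants C₁, C₂, D and thresholds θ, λ with b₁ < θ < λ, θ ∈ (4.84, 4.85) and λ ∈ (7.95, 7.96), satisfying the five matching equations: C₁e^{γ₊θ} + C₂e^{γ₋θ} = B + θ − b₁ − log(θ/b₁); C₁γ₊e^{γ₊θ} + C₂γ₋e^{γ₋θ} = 1 − 1/θ; C₁e^{γ₊λ} + C₂e^{γ₋λ} = D; C₁γ₊e^{γ₊λ} + C₂γ₋e^{γ₋λ} = 1 − 1/λ; C₁γ₊²e^{γ₊λ} + C₂γ₋²e^{γ₋λ}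 = 1/λ². -/
/-!
Let `γ`, `γ'` be the roots of the characteristic polynomial of `v'' + μ v' - r v = 0`. Along every
solution `v` the quantity `(v' - γ' v) e^{-γx}` is constant, and along an arbitrary `f` its
derivative is `(f'' + μ f' - r f) e^{-γx}`. Let `g` be the value function below `θ`, so that
`g' = η`. The matching equations prescribe `(v, v')` as `(g, η)` at `θ` and `(v', v'')` as
`(η, η')` at `λ`. Eliminating `v`, they say that for both roots the quantity of `η` at `λ` is `γ`
times that of `g` at `θ`. Near the expected thresholds the residuals of `η` and of `g` are
negative, so all these quantities decrease. As the roots have opposite signs, the two equations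
define curves in the `(θ, λ)`-plane with slopes of opposite signs, and these cross in a small box
as soon as four inequalities hold at its corners. The smooth-fit equation locates `b₁` accurately
enough for these inequalities.
-/

open Real Set

section TaylorBounds

theorem exp_div_natCast_pow {k : ℕ} (hk : k ≠ 0) (x : ℝ) : exp (x / k) ^ k = exp x := by
  rw [← exp_nat_mul, mul_div_cancel₀ x (Nat.cast_ne_zero.2 hk)]

theorem exp_le_taylor_pow {n k : ℕ} {x : ℝ} (hn : 0 < n) (hk : k ≠ 0) (hx : |x / k| ≤ 1) :
    exp x ≤ (∑ m ∈ Finset.range n, (x / k) ^ m / m.factorial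
      + |x / k| ^ n * (n.succ / (n.factorial * n))) ^ k := by
  rw [← exp_div_natCast_pow hk x]
  gcongr
  linarith [(abs_sub_le_iff.1 (exp_bound hx hn)).1]

theorem taylor_pow_le_exp {n k : ℕ} {x : ℝ} (hn : 0 < n) (hk : k ≠ 0) (hx : |x / k| ≤ 1)
    (h₀ : 0 ≤ ∑ m ∈ Finset.range n, (x / k) ^ m / m.factorial
      - |x / k| ^ n * (n.succ / (n.factorial * n))) :
    (∑ m ∈ Finset.range n, (x / k) ^ m / m.factorial
      - |x / k| ^ n * (n.succ / (n.factorial * n))) ^ k ≤ exp x := by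
  rw [← exp_div_natCast_pow hk x]
  gcongr
  linarith [(abs_sub_le_iff.1 (exp_bound hx hn)).2]

end TaylorBounds

section SeparatedSystem

/-- Since `p₁` is an embedding, the first equation determines `y` as a continuous function of `x`,
and the second one is then solved by the intermediate value theorem. -/
theorem exists_eq_and_eq_of_injective {X Y Z α : Type*} [TopologicalSpace X] [PreconnectedSpace X]
    [TopologicalSpace Y] [CompactSpace Y] [TopologicalSpace Z] [T2Space Z]
    [LinearOrder α] [TopologicalSpace α] [OrderClosedTopology α]
    {p₁ : Y → Z} {p₂ : Y → α} {q₁ : X → Z} {q₂ : X → α}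
    (hp₁ : Continuous p₁) (hp₂ : Continuous p₂) (hq₁ : Continuous q₁) (hq₂ : Continuous q₂)
    (hinj : p₁.Injective) (hrange : ∀ x, q₁ x ∈ range p₁) {a b : X}
    (ha : ∀ y, q₂ a ≤ p₂ y) (hb : ∀ y, p₂ y ≤ q₂ b) :
    ∃ x y, p₁ y = q₁ x ∧ p₂ y = q₂ x := by
  choose y hy using hrange
  have hcont : Continuous y := by
    rw [(hp₁.isClosedEmbedding hinj).isInducing.continuous_iff]
    exact hq₁.congr fun x => (hy x).symm
  obtain ⟨x, hx⟩ := intermediate_value_univ₂ hq₂ (hp₂.comp hcont) (ha (y a)) (hb (y b))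
  exact ⟨x, y x, hy x, hx.symm⟩

theorem exists_eq_and_eq_of_antitoneOn {p₁ p₂ q₁ q₂ : ℝ → ℝ} {t₀ t₁ l₀ l₁ : ℝ}
    (ht : t₀ ≤ t₁) (hl : l₀ ≤ l₁)
    (hp₁ : ContinuousOn p₁ (Icc l₀ l₁)) (hp₂ : ContinuousOn p₂ (Icc l₀ l₁))
    (hq₁ : ContinuousOn q₁ (Icc t₀ t₁)) (hq₂ : ContinuousOn q₂ (Icc t₀ t₁))
    (mp₁ : StrictAntiOn p₁ (Icc l₀ l₁)) (mp₂ : AntitoneOn p₂ (Icc l₀ l₁))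
    (mq₁ : AntitoneOn q₁ (Icc t₀ t₁))
    (h₁₀ : q₁ t₀ ≤ p₁ l₀) (h₁₁ : p₁ l₁ ≤ q₁ t₁) (h₂₀ : q₂ t₀ ≤ p₂ l₁) (h₂₁ : p₂ l₀ ≤ q₂ t₁) :
    ∃ t ∈ Icc t₀ t₁, ∃ l ∈ Icc l₀ l₁, p₁ l = q₁ t ∧ p₂ l = q₂ t := by
  have := Subtype.preconnectedSpace (isPreconnected_Icc (a := t₀) (b := t₁))
  have hrange (t : Icc t₀ t₁) :
      (Icc t₀ t₁).domRestrict q₁ t ∈ range ((Icc l₀ l₁).domRestrict p₁) := by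
    rw [range_domRestrict]
    exact intermediate_value_Icc' hl hp₁
      ⟨h₁₁.trans (mq₁ t.2 (right_mem_Icc.2 ht) t.2.2),
        (mq₁ (left_mem_Icc.2 ht) t.2 t.2.1).trans h₁₀⟩
  obtain ⟨t, l, h₁, h₂⟩ := exists_eq_and_eq_of_injective hp₁.domRestrict hp₂.domRestrict
    hq₁.domRestrict hq₂.domRestrict mp₁.injOn.injective hrange
    (a := ⟨t₀, left_mem_Icc.2 ht⟩) (b := ⟨t₁, right_mem_Icc.2 ht⟩)
    (fun l => h₂₀.trans (mp₂ l.2 (right_mem_Icc.2 hl) l.2.2))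
    (fun l => (mp₂ (left_mem_Icc.2 hl) l.2 l.2.1).trans h₂₁)
  exact ⟨t, t.2, l, l.2, h₁, h₂⟩

end SeparatedSystem

section FirstIntegral

/-- The quantity `(f' - γ' f) e^{-γx}`, which is constant along the solutions of the linear equation
`f'' - (γ + γ') f' + γ γ' f = 0` with characteristic roots `γ` and `γ'`. The derivative `f'` is a
separate argument. -/
noncomputable def firstIntegral (γ γ' : ℝ) (f f' : ℝ → ℝ) (x : ℝ) : ℝ :=
  (f' x - γ' * f x) * exp (-γ * x)

variable {γ γ' : ℝ} {f f' f'' g g' : ℝ → ℝ}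

theorem hasDerivAt_firstIntegral {d x : ℝ} (γ γ' : ℝ) (hf : HasDerivAt f (f' x) x)
    (hf' : HasDerivAt f' d x) :
    HasDerivAt (firstIntegral γ γ' f f')
      ((d - (γ + γ') * f' x + γ * γ' * f x) * exp (-γ * x)) x := by
  have hexp : HasDerivAt (fun y => exp (-γ * y)) (exp (-γ * x) * (-γ * 1)) x :=
    ((hasDerivAt_id x).const_mul (-γ)).exp
  refine ((hf'.sub (hf.const_mul γ')).mul hexp).congr_deriv ?_
  simp only [Pi.sub_apply]
  ring

theorem continuousOn_firstIntegral {s : Set ℝ} (γ γ' : ℝ) (hf : ∀ x ∈ s, HasDerivAt f (f' x) x)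
    (hf' : ∀ x ∈ s, HasDerivAt f' (f'' x) x) : ContinuousOn (firstIntegral γ γ' f f') s :=
  fun x hx => (hasDerivAt_firstIntegral γ γ' (hf x hx) (hf' x hx)).continuousAt.continuousWithinAt

theorem strictAntiOn_firstIntegral {s : Set ℝ} (hs : Convex ℝ s)
    (hf : ∀ x ∈ s, HasDerivAt f (f' x) x) (hf' : ∀ x ∈ s, HasDerivAt f' (f'' x) x)
    (hneg : ∀ x ∈ s, f'' x - (γ + γ') * f' x + γ * γ' * f x < 0) :
    StrictAntiOn (firstIntegral γ γ' f f') s := by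
  refine strictAntiOn_of_deriv_neg hs (continuousOn_firstIntegral γ γ' hf hf') fun x hx => ?_
  have hxs := interior_subset hx
  rw [(hasDerivAt_firstIntegral γ γ' (hf x hxs) (hf' x hxs)).deriv]
  exact mul_neg_of_neg_of_pos (hneg x hxs) (exp_pos _)

theorem mul_firstIntegral_le {c t l A E : ℝ} (hA : c * (g' t - γ' * g t) ≤ A) (hA₀ : 0 ≤ A)
    (hE : exp (γ * (l - t)) ≤ E) (h : A * E ≤ f' l - γ' * f l) :
    c * firstIntegral γ γ' g g' t ≤ firstIntegral γ γ' f f' l := by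
  have hexp : exp (-γ * t) = exp (γ * (l - t)) * exp (-γ * l) := by rw [← exp_add]; ring_nf
  calc c * firstIntegral γ γ' g g' t
      = c * (g' t - γ' * g t) * exp (γ * (l - t)) * exp (-γ * l) := by
        rw [firstIntegral, hexp]; ring
    _ ≤ A * E * exp (-γ * l) := by gcongr
    _ ≤ firstIntegral γ γ' f f' l := by rw [firstIntegral]; gcongr

theorem le_mul_firstIntegral {c t l A E : ℝ} (hA : A ≤ c * (g' t - γ' * g t)) (hA₀ : 0 ≤ A)
    (hE : E ≤ exp (γ * (l - t))) (h : f' l - γ' * f l ≤ A * E) :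
    firstIntegral γ γ' f f' l ≤ c * firstIntegral γ γ' g g' t := by
  have hexp : exp (-γ * t) = exp (γ * (l - t)) * exp (-γ * l) := by rw [← exp_add]; ring_nf
  calc firstIntegral γ γ' f f' l ≤ A * E * exp (-γ * l) := by rw [firstIntegral]; gcongr
    _ ≤ A * exp (γ * (l - t)) * exp (-γ * l) := by gcongr
    _ ≤ c * (g' t - γ' * g t) * exp (γ * (l - t)) * exp (-γ * l) := by gcongr
    _ = c * firstIntegral γ γ' g g' t := by rw [firstIntegral, hexp]; ring

/-- Both first integrals of `f` decrease, whereas `γp * firstIntegral γp γm g g'` decreases and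
`γm * firstIntegral γm γp g g'` increases: the two level curves in the `(t, l)`-plane have slopes of
opposite signs. -/
theorem exists_firstIntegral_eq {γp γm t₀ t₁ l₀ l₁ : ℝ} {g'' : ℝ → ℝ} (hγp : 0 ≤ γp)
    (ht : t₀ ≤ t₁) (hl : l₀ ≤ l₁)
    (hf : ∀ x ∈ Icc l₀ l₁, HasDerivAt f (f' x) x) (hf' : ∀ x ∈ Icc l₀ l₁, HasDerivAt f' (f'' x) x)
    (hg : ∀ x ∈ Icc t₀ t₁, HasDerivAt g (g' x) x) (hg' : ∀ x ∈ Icc t₀ t₁, HasDerivAt g' (g'' x) x)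
    (hfneg : ∀ x ∈ Icc l₀ l₁, f'' x - (γp + γm) * f' x + γp * γm * f x < 0)
    (hgneg : ∀ x ∈ Icc t₀ t₁, g'' x - (γp + γm) * g' x + γp * γm * g x < 0)
    (hp₀ : γp * firstIntegral γp γm g g' t₀ ≤ firstIntegral γp γm f f' l₀)
    (hp₁ : firstIntegral γp γm f f' l₁ ≤ γp * firstIntegral γp γm g g' t₁)
    (hm₀ : γm * firstIntegral γm γp g g' t₀ ≤ firstIntegral γm γp f f' l₁)
    (hm₁ : firstIntegral γm γp f f' l₀ ≤ γm * firstIntegral γm γp g g' t₁) :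
    ∃ t ∈ Icc t₀ t₁, ∃ l ∈ Icc l₀ l₁,
      firstIntegral γp γm f f' l = γp * firstIntegral γp γm g g' t ∧
      firstIntegral γm γp f f' l = γm * firstIntegral γm γp g g' t := by
  have hfneg' (x) (hx : x ∈ Icc l₀ l₁) : f'' x - (γm + γp) * f' x + γm * γp * f x < 0 := by
    simpa only [add_comm γm, mul_comm γm] using hfneg x hx
  refine exists_eq_and_eq_of_antitoneOn (q₁ := fun t => γp * firstIntegral γp γm g g' t)
    (q₂ := fun t => γm * firstIntegral γm γp g g' t) ht hl
    (continuousOn_firstIntegral γp γm hf hf') (continuousOn_firstIntegral γm γp hf hf')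
    (continuousOn_const.mul (continuousOn_firstIntegral γp γm hg hg'))
    (continuousOn_const.mul (continuousOn_firstIntegral γm γp hg hg'))
    (strictAntiOn_firstIntegral (convex_Icc _ _) hf hf' hfneg)
    (strictAntiOn_firstIntegral (convex_Icc _ _) hf hf' hfneg').antitoneOn
    (fun x hx y hy hxy => ?_) hp₀ hp₁ hm₀ hm₁
  exact mul_le_mul_of_nonneg_left
    ((strictAntiOn_firstIntegral (convex_Icc _ _) hg hg' hgneg).antitoneOn hx hy hxy) hγp

end FirstIntegral

section Matching

variable {γp γm : ℝ}

theorem exp_combination_eq_of_coeff {c₁ c₂ y y' x : ℝ} (hne : γp ≠ γm)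
    (h₁ : c₁ * (γp - γm) = (y' - γm * y) * exp (-γp * x))
    (h₂ : c₂ * (γm - γp) = (y' - γp * y) * exp (-γm * x)) :
    c₁ * exp (γp * x) + c₂ * exp (γm * x) = y ∧
      c₁ * γp * exp (γp * x) + c₂ * γm * exp (γm * x) = y' := by
  have hcancel (γ : ℝ) : exp (-γ * x) * exp (γ * x) = 1 := by rw [← exp_add]; simp
  have hsub : γp - γm ≠ 0 := sub_ne_zero.2 hne
  constructor <;> refine mul_right_cancel₀ hsub ?_
  · linear_combination exp (γp * x) * h₁ - exp (γm * x) * h₂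
      + (y' - γm * y) * hcancel γp - (y' - γp * y) * hcancel γm
  · linear_combination γp * exp (γp * x) * h₁ - γm * exp (γm * x) * h₂
      + γp * (y' - γm * y) * hcancel γp - γm * (y' - γp * y) * hcancel γm

/-- If `v` solves the equation, then so does `v'`, and passing from `v` to `v'` multiplies the first
integral attached to `γ` by `γ`. -/
theorem exists_exp_combination_of_firstIntegral_eq {f f' g g' : ℝ → ℝ} {t l : ℝ} (hne : γp ≠ γm)
    (hp : firstIntegral γp γm f f' l = γp * firstIntegral γp γm g g' t)
    (hm : firstIntegral γm γp f f' l = γm * firstIntegral γm γp g g' t) :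
    ∃ C₁ C₂ : ℝ, C₁ * exp (γp * t) + C₂ * exp (γm * t) = g t ∧
      C₁ * γp * exp (γp * t) + C₂ * γm * exp (γm * t) = g' t ∧
      C₁ * γp * exp (γp * l) + C₂ * γm * exp (γm * l) = f l ∧
      C₁ * γp ^ 2 * exp (γp * l) + C₂ * γm ^ 2 * exp (γm * l) = f' l := by
  have hC₁ : firstIntegral γp γm g g' t / (γp - γm) * (γp - γm) = firstIntegral γp γm g g' t :=
    div_mul_cancel₀ _ (sub_ne_zero.2 hne)
  have hC₂ : firstIntegral γm γp g g' t / (γm - γp) * (γm - γp) = firstIntegral γm γp g g' t :=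
    div_mul_cancel₀ _ (sub_ne_zero.2 hne.symm)
  obtain ⟨hv, hv'⟩ := exp_combination_eq_of_coeff hne hC₁ hC₂
  obtain ⟨hw, hw'⟩ := exp_combination_eq_of_coeff (y := f l) (y' := f' l) (x := l) hne
    (c₁ := firstIntegral γp γm g g' t / (γp - γm) * γp)
    (c₂ := firstIntegral γm γp g g' t / (γm - γp) * γm)
    (by rw [mul_right_comm, hC₁, mul_comm, ← hp, firstIntegral])
    (by rw [mul_right_comm, hC₂, mul_comm, ← hm, firstIntegral])
  exact ⟨_, _, hv, hv', hw, by simpa only [mul_assoc, sq] using hw'⟩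

end Matching

section Problem

/-- `γp > 0` and `γm` are the roots of the characteristic polynomial `X² + μ X - r` of the equation
`v'' + μ v' - r v = 0`, to which `σ²/2 v'' + μ v' - r v = 0` reduces for `σ = √2`. -/
structure IsCharRoots (μ r γp γm : ℝ) : Prop where
  add : γp + γm = -μ
  mul : γp * γm = -r
  pos : 0 < γp

/-- The marginal value `η` of the problem, on its branch `1 ≤ x`. -/
noncomputable def marginalValue (x : ℝ) : ℝ := 1 - 1 / x

/-- The primitive of `marginalValue` taking the value `B` at `b`: the value function between the
thresholds `b₁` and `θ`. -/
noncomputable def actionValue (B b x : ℝ) : ℝ := B + x - b - log (x / b)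

/-- The solution `φ` of the equation with `φ'(0) = 0`, written in terms of the roots. -/
noncomputable def neumannSolution (γp γm x : ℝ) : ℝ := exp (γp * x) / γp - exp (γm * x) / γm

variable {μ r γp γm B b x : ℝ}

theorem isCharRoots_quadratic_formula {σ : ℝ} (hσ : σ ≠ 0) (hr : 0 < r) :
    IsCharRoots (2 * μ / σ ^ 2) (2 * r / σ ^ 2) ((-μ + √(μ ^ 2 + 2 * r * σ ^ 2)) / σ ^ 2)
      ((-μ - √(μ ^ 2 + 2 * r * σ ^ 2)) / σ ^ 2) := by
  have hlt : |μ| < √(μ ^ 2 + 2 * r * σ ^ 2) := by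
    rw [← sqrt_sq_eq_abs]
    exact sqrt_lt_sqrt (sq_nonneg μ) (lt_add_of_pos_right _ (by positivity))
  have hsq : √(μ ^ 2 + 2 * r * σ ^ 2) ^ 2 = μ ^ 2 + 2 * r * σ ^ 2 := sq_sqrt (by positivity)
  refine ⟨by ring, ?_, div_pos (by linarith [le_abs_self μ]) (by positivity)⟩
  field_simp
  linear_combination -hsq

theorem IsCharRoots.neg (h : IsCharRoots μ r γp γm) (hr : 0 < r) : γm < 0 :=
  neg_of_mul_neg_right (h.mul ▸ neg_neg_of_pos hr) h.pos.le

theorem hasDerivAt_marginalValue (hx : x ≠ 0) : HasDerivAt marginalValue (1 / x ^ 2) x := by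
  have hη : marginalValue = fun y => 1 - y⁻¹ := funext fun y => by rw [marginalValue, one_div]
  simpa [hη] using (hasDerivAt_inv hx).const_sub 1

theorem hasDerivAt_one_div_sq (hx : x ≠ 0) :
    HasDerivAt (fun y : ℝ => 1 / y ^ 2) (-2 / x ^ 3) x := by
  simp only [one_div]
  refine ((hasDerivAt_pow 2 x).fun_inv (pow_ne_zero 2 hx)).congr_deriv ?_
  field_simp
  norm_num [mul_comm]

theorem hasDerivAt_actionValue (hb : b ≠ 0) (hx : x ≠ 0) :
    HasDerivAt (actionValue B b) (marginalValue x) x := by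
  refine ((((hasDerivAt_id x).const_add B).sub_const b).sub
    (((hasDerivAt_id x).div_const b).log (div_ne_zero hx hb))).congr_deriv ?_
  rw [marginalValue]
  simp only [id]
  field_simp

theorem hasDerivAt_neumannSolution (hp : γp ≠ 0) (hm : γm ≠ 0) (x : ℝ) :
    HasDerivAt (neumannSolution γp γm) (exp (γp * x) - exp (γm * x)) x := by
  have hexp (γ : ℝ) : HasDerivAt (fun y => exp (γ * y)) (exp (γ * x) * (γ * 1)) x :=
    ((hasDerivAt_id x).const_mul γ).exp
  refine (((hexp γp).div_const γp).sub ((hexp γm).div_const γm)).congr_deriv ?_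
  field_simp

/-- With `φ'' + μ φ' = r φ` and `φ' / φ'' = b² - b`, this is `φ / φ'` computed at `b`. -/
theorem IsCharRoots.mul_smoothFit_value (h : IsCharRoots μ r γp γm) (hr : 0 < r) (hb : 1 < b)
    (hfit : b ^ 2 - b = (exp (γp * b) - exp (γm * b)) /
      (γp * exp (γp * b) - γm * exp (γm * b))) :
    r * (marginalValue b / deriv (neumannSolution γp γm) b * neumannSolution γp γm b) =
      μ * marginalValue b + 1 / b ^ 2 := by
  have hp := h.pos.ne'
  have hm := (h.neg hr).ne
  have hφ : r * neumannSolution γp γm b =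
      (γp * exp (γp * b) - γm * exp (γm * b)) + μ * (exp (γp * b) - exp (γm * b)) := by
    rw [neumannSolution, ← neg_eq_iff_eq_neg.2 h.mul, ← neg_eq_iff_eq_neg.2 h.add]
    field_simp
    ring
  have hbb : b ^ 2 - b = b * (b - 1) := by ring
  have hb₁ : b - 1 ≠ 0 := by linarith
  have hquot : b * (b - 1) ≠ 0 := by positivity
  rw [(hasDerivAt_neumannSolution hp hm b).deriv, mul_left_comm, hφ]
  generalize γp * exp (γp * b) - γm * exp (γm * b) = w at *
  generalize exp (γp * b) - exp (γm * b) = u at *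
  rw [hbb] at hfit
  obtain ⟨hu, hw⟩ := div_ne_zero_iff.1 (hfit ▸ hquot)
  rw [eq_div_iff hw] at hfit
  rw [marginalValue, ← hfit]
  field_simp
  ring

/-- Dividing the smooth-fit equation by `e^{γm b}` leaves a single exponential. -/
theorem smoothFit_exp_sub (hfit : b ^ 2 - b = (exp (γp * b) - exp (γm * b)) /
      (γp * exp (γp * b) - γm * exp (γm * b))) (hb : 1 < b) :
    exp ((γp - γm) * b) * (1 - γp * (b ^ 2 - b)) = 1 - γm * (b ^ 2 - b) := by
  have hbb : b ^ 2 - b ≠ 0 := by nlinarith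
  have hw := (div_ne_zero_iff.1 (hfit ▸ hbb)).2
  rw [eq_div_iff hw] at hfit
  have hexp : exp (γp * b) = exp ((γp - γm) * b) * exp (γm * b) := by rw [← exp_add]; ring_nf
  refine mul_right_cancel₀ (exp_pos (γm * b)).ne' ?_
  rw [hexp] at hfit
  linear_combination -hfit

end Problem

section Numerics

variable {γp γm B b x : ℝ}

theorem IsCharRoots.posRoot_mem_Ioo (h : IsCharRoots 0.508378 0.00520074 γp γm) :
    γp ∈ Ioo 0.010032096283 0.010032096284 := by
  have hroot : γp * (γp + 0.508378) = 0.00520074 := by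
    linear_combination γp * h.add - h.mul
  have := h.pos
  constructor <;> nlinarith

theorem IsCharRoots.negRoot_mem_Ioo (h : IsCharRoots 0.508378 0.00520074 γp γm) :
    γm ∈ Ioo (-0.518410096284) (-0.518410096283) := by
  obtain ⟨hlo, hhi⟩ := h.posRoot_mem_Ioo
  constructor <;> linarith [h.add]

theorem IsCharRoots.exp_sub_mul_mem_Icc (h : IsCharRoots 0.508378 0.00520074 γp γm) :
    exp ((γp - γm) * 4.1813804) ∈ Icc 9.11223327 9.11223328 := by
  obtain ⟨hp₀, hp₁⟩ := h.posRoot_mem_Ioo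
  obtain ⟨hm₀, hm₁⟩ := h.negRoot_mem_Ioo
  constructor
  · calc (9.11223327 : ℝ) ≤ _ := by norm_num [Finset.sum_range_succ, Nat.factorial]
      _ ≤ exp 2.2096178265 := taylor_pow_le_exp (n := 12) (k := 4) (by norm_num) (by norm_num)
        (by norm_num [abs_le]) (by norm_num [Finset.sum_range_succ, Nat.factorial])
      _ ≤ _ := exp_le_exp.2 (by linarith)
  · calc exp ((γp - γm) * 4.1813804) ≤ exp 2.2096178266 := exp_le_exp.2 (by linarith)
      _ ≤ _ := exp_le_taylor_pow (n := 12) (k := 4) (by norm_num) (by norm_num)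
        (by norm_num [abs_le])
      _ ≤ 9.11223328 := by norm_num [Finset.sum_range_succ, Nat.factorial]

/-- The root is close to `4.1813804`. Bounding the exponential below by its tangent there leaves a
polynomial inequality in `b`. -/
theorem IsCharRoots.lt_smoothFit_root (h : IsCharRoots 0.508378 0.00520074 γp γm)
    (hb : b ∈ Ioo 4.18 4.19)
    (hfit : exp ((γp - γm) * b) * (1 - γp * (b ^ 2 - b)) = 1 - γm * (b ^ 2 - b)) :
    4.18138 < b := by
  obtain ⟨hp₀, hp₁⟩ := h.posRoot_mem_Ioo
  have hm₀ := h.negRoot_mem_Ioo.1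
  obtain ⟨hb₀, hb₁⟩ := hb
  have hq₀ : 0 < b ^ 2 - b := by nlinarith
  have hq₁ : b ^ 2 - b < 14 := by nlinarith
  by_contra! hle
  have htan : 9.11223327 * (1 + 0.528442192568 * (b - 4.1813804)) ≤ exp ((γp - γm) * b) :=
    calc 9.11223327 * (1 + 0.528442192568 * (b - 4.1813804))
        ≤ exp ((γp - γm) * 4.1813804) * exp ((γp - γm) * (b - 4.1813804)) := by
          gcongr
          · nlinarith
          · exact h.exp_sub_mul_mem_Icc.1
          · nlinarith [add_one_le_exp ((γp - γm) * (b - 4.1813804))]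
      _ = exp ((γp - γm) * b) := by rw [← exp_add]; ring_nf
  have hpoly : 9.11223327 * (1 + 0.528442192568 * (b - 4.1813804)) *
      (1 - 0.010032096284 * (b ^ 2 - b)) ≤ 1 + 0.518410096284 * (b ^ 2 - b) :=
    calc _ ≤ exp ((γp - γm) * b) * (1 - γp * (b ^ 2 - b)) := by
          gcongr
          nlinarith
      _ = 1 - γm * (b ^ 2 - b) := hfit
      _ ≤ 1 + 0.518410096284 * (b ^ 2 - b) := by nlinarith
  nlinarith [mul_nonneg (sub_nonneg.2 hle) (sub_nonneg.2 hb₀.le)]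

/-- As for the lower bound, with the tangent of `fun x => exp (-x)`. -/
theorem IsCharRoots.smoothFit_root_lt (h : IsCharRoots 0.508378 0.00520074 γp γm)
    (hb : b ∈ Ioo 4.18 4.19)
    (hfit : exp ((γp - γm) * b) * (1 - γp * (b ^ 2 - b)) = 1 - γm * (b ^ 2 - b)) :
    b < 4.181381 := by
  obtain ⟨hp₀, hp₁⟩ := h.posRoot_mem_Ioo
  obtain ⟨hm₀, hm₁⟩ := h.negRoot_mem_Ioo
  obtain ⟨hb₀, hb₁⟩ := hb
  have hq₀ : 0 < b ^ 2 - b := by nlinarith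
  by_contra! hle
  have hpoly : (1 - 0.528442192568 * (b - 4.1813804)) * (1 + 0.518410096283 * (b ^ 2 - b)) ≤
      9.11223328 * (1 - 0.010032096283 * (b ^ 2 - b)) :=
    calc _ ≤ exp ((γp - γm) * (4.1813804 - b)) * (1 - γm * (b ^ 2 - b)) := by
          gcongr
          · nlinarith [add_one_le_exp ((γp - γm) * (4.1813804 - b))]
          · nlinarith
      _ = exp ((γp - γm) * 4.1813804) * (1 - γp * (b ^ 2 - b)) := by
          rw [← hfit, ← mul_assoc, ← exp_add]; ring_nf
      _ ≤ _ := by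
          gcongr
          · nlinarith
          · exact h.exp_sub_mul_mem_Icc.2
  nlinarith [mul_nonneg (sub_nonneg.2 hle) (sub_nonneg.2 hb₁.le)]

theorem IsCharRoots.smoothFit_root_mem_Ioo (h : IsCharRoots 0.508378 0.00520074 γp γm)
    (hb : b ∈ Ioo 4.18 4.19)
    (hfit : b ^ 2 - b = (exp (γp * b) - exp (γm * b)) /
      (γp * exp (γp * b) - γm * exp (γm * b))) :
    b ∈ Ioo 4.18138 4.181381 := by
  have hexp := smoothFit_exp_sub hfit (by linarith [hb.1])
  exact ⟨h.lt_smoothFit_root hb hexp, h.smoothFit_root_lt hb hexp⟩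

/-- `4.8475` and `4.8499` are the endpoints of the interval in which `θ` is found. -/
theorem le_log_left_endpoint_div (hb : b ∈ Ioo 4.18138 4.181381) :
    0.1478215 ≤ log (4.8475 / b) := by
  obtain ⟨hb₀, hb₁⟩ := hb
  have : 0 < b := by linarith
  rw [le_log_iff_exp_le (by positivity)]
  calc exp 0.1478215 ≤ _ := exp_le_taylor_pow (n := 7) (k := 1) (by norm_num) (by norm_num)
        (by norm_num [abs_le])
    _ ≤ 4.8475 / 4.181381 := by norm_num [Finset.sum_range_succ, Nat.factorial]
    _ ≤ 4.8475 / b := by gcongr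

theorem log_right_endpoint_div_le (hb : b ∈ Ioo 4.18138 4.181381) :
    log (4.8499 / b) ≤ 0.1483168 := by
  obtain ⟨hb₀, hb₁⟩ := hb
  have : 0 < b := by linarith
  rw [log_le_iff_le_exp (by positivity)]
  calc 4.8499 / b ≤ 4.8499 / 4.18138 := by gcongr
    _ ≤ _ := by norm_num [Finset.sum_range_succ, Nat.factorial]
    _ ≤ exp 0.1483168 := taylor_pow_le_exp (n := 7) (k := 1) (by norm_num) (by norm_num)
        (by norm_num [abs_le]) (by norm_num [Finset.sum_range_succ, Nat.factorial])

theorem mul_marginalValue_add_mem_Icc (hb : b ∈ Ioo 4.18138 4.181381) :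
    0.508378 * marginalValue b + 1 / b ^ 2 ∈ Icc 0.443991957 0.443991961 := by
  obtain ⟨hb₀, hb₁⟩ := hb
  have : 0 < b := by linarith
  have hy₀ : 1 / 4.181381 ≤ 1 / b := by gcongr
  have hy₁ : 1 / b ≤ 1 / 4.18138 := by gcongr
  rw [marginalValue, ← one_div_pow]
  generalize 1 / b = y at *
  norm_num at hy₀ hy₁
  constructor <;> nlinarith

theorem mul_actionValue_left_endpoint_le (hb : b ∈ Ioo 4.18138 4.181381)
    (hB : 0.00520074 * B = 0.508378 * marginalValue b + 1 / b ^ 2) :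
    0.00520074 * actionValue B b 4.8475 ≤ 0.446687502 := by
  rw [actionValue]
  linarith [hb.1, (mul_marginalValue_add_mem_Icc hb).2, le_log_left_endpoint_div hb]

theorem le_mul_actionValue_right_endpoint (hb : b ∈ Ioo 4.18138 4.181381)
    (hB : 0.00520074 * B = 0.508378 * marginalValue b + 1 / b ^ 2) :
    0.446697390 ≤ 0.00520074 * actionValue B b 4.8499 := by
  rw [actionValue]
  linarith [hb.2, (mul_marginalValue_add_mem_Icc hb).1, log_right_endpoint_div_le hb]

theorem marginalValue_residual_neg (hx : 7.95 ≤ x) :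
    -2 / x ^ 3 + 0.508378 * (1 / x ^ 2) - 0.00520074 * marginalValue x < 0 := by
  have : 0 < x := by linarith
  have hnum : -2 + 0.508378 * x - 0.00520074 * (x ^ 3 - x ^ 2) < 0 := by nlinarith [sq_nonneg x]
  calc _ = (-2 + 0.508378 * x - 0.00520074 * (x ^ 3 - x ^ 2)) / x ^ 3 := by
        rw [marginalValue]; field_simp
    _ < 0 := div_neg_of_neg_of_pos hnum (by positivity)

theorem actionValue_residual_neg (hb : b ∈ Ioo 4.18138 4.181381)
    (hB : 0.00520074 * B = 0.508378 * marginalValue b + 1 / b ^ 2)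
    (hx : x ∈ Icc 4.8475 4.8499) :
    1 / x ^ 2 + 0.508378 * marginalValue x - 0.00520074 * actionValue B b x < 0 := by
  obtain ⟨hx₀, hx₁⟩ := hx
  obtain ⟨hb₀, hb₁⟩ := hb
  have : 0 < x := by linarith
  have : 0 < b := by linarith
  have hlog : log (x / b) ≤ 0.16 :=
    calc log (x / b) ≤ x / b - 1 := log_le_sub_one_of_pos (by positivity)
      _ ≤ 4.8499 / 4.18138 - 1 := by gcongr
      _ ≤ 0.16 := by norm_num
  have hy₀ : 1 / 4.8499 ≤ 1 / x := by gcongr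
  have hy₁ : 1 / x ≤ 1 / 4.8475 := by gcongr
  have hBlow := (mul_marginalValue_add_mem_Icc ⟨hb₀, hb₁⟩).1
  rw [← hB] at hBlow
  rw [marginalValue, actionValue, ← one_div_pow]
  generalize 1 / x = y at *
  norm_num at hy₀ hy₁
  nlinarith

theorem IsCharRoots.posRoot_mul_firstIntegral_le (h : IsCharRoots 0.508378 0.00520074 γp γm)
    (hb : b ∈ Ioo 4.18138 4.181381)
    (hB : 0.00520074 * B = 0.508378 * marginalValue b + 1 / b ^ 2) :
    γp * firstIntegral γp γm (actionValue B b) marginalValue 4.8475 ≤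
      firstIntegral γp γm marginalValue (fun y => 1 / y ^ 2) 7.9501 := by
  obtain ⟨hp₀, hp₁⟩ := h.posRoot_mem_Ioo
  refine mul_firstIntegral_le (A := 0.45465006) (E := 1.031615049) ?_ (by norm_num) ?_ ?_
  · calc _ = γp * marginalValue 4.8475 + 0.00520074 * actionValue B b 4.8475 := by
          linear_combination -actionValue B b 4.8475 * h.mul
      _ ≤ 0.010032096284 * marginalValue 4.8475 + 0.446687502 := by
          gcongr
          · norm_num [marginalValue]
          · exact mul_actionValue_left_endpoint_le hb hB
      _ ≤ 0.45465006 := by norm_num [marginalValue]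
  · calc exp (γp * (7.9501 - 4.8475)) ≤ exp 0.0311255820 := exp_le_exp.2 (by linarith)
      _ ≤ _ := exp_le_taylor_pow (n := 5) (k := 1) (by norm_num) (by norm_num)
        (by norm_num [abs_le])
      _ ≤ 1.031615049 := by norm_num [Finset.sum_range_succ, Nat.factorial]
  · norm_num [marginalValue]
    linarith [h.negRoot_mem_Ioo.2]

theorem IsCharRoots.le_posRoot_mul_firstIntegral (h : IsCharRoots 0.508378 0.00520074 γp γm)
    (hb : b ∈ Ioo 4.18138 4.181381)
    (hB : 0.00520074 * B = 0.508378 * marginalValue b + 1 / b ^ 2) :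
    firstIntegral γp γm marginalValue (fun y => 1 / y ^ 2) 7.9503 ≤
      γp * firstIntegral γp γm (actionValue B b) marginalValue 4.8499 := by
  obtain ⟨hp₀, hp₁⟩ := h.posRoot_mem_Ioo
  refine le_mul_firstIntegral (A := 0.45466096) (E := 1.031592279) ?_ (by norm_num) ?_ ?_
  · calc (0.45466096 : ℝ) ≤ 0.010032096283 * marginalValue 4.8499 + 0.446697390 := by
          norm_num [marginalValue]
      _ ≤ γp * marginalValue 4.8499 + 0.00520074 * actionValue B b 4.8499 := by
          gcongr
          · norm_num [marginalValue]
          · exact le_mul_actionValue_right_endpoint hb hB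
      _ = _ := by linear_combination actionValue B b 4.8499 * h.mul
  · calc (1.031592279 : ℝ) ≤ _ := by norm_num [Finset.sum_range_succ, Nat.factorial]
      _ ≤ exp 0.0311035113 := taylor_pow_le_exp (n := 6) (k := 1) (by norm_num) (by norm_num)
        (by norm_num [abs_le]) (by norm_num [Finset.sum_range_succ, Nat.factorial])
      _ ≤ _ := exp_le_exp.2 (by linarith)
  · norm_num [marginalValue]
    linarith [h.negRoot_mem_Ioo.1]

theorem IsCharRoots.negRoot_mul_firstIntegral_le (h : IsCharRoots 0.508378 0.00520074 γp γm)
    (hb : b ∈ Ioo 4.18138 4.181381)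
    (hB : 0.00520074 * B = 0.508378 * marginalValue b + 1 / b ^ 2) :
    γm * firstIntegral γm γp (actionValue B b) marginalValue 4.8475 ≤
      firstIntegral γm γp marginalValue (fun y => 1 / y ^ 2) 7.9503 := by
  obtain ⟨hm₀, hm₁⟩ := h.negRoot_mem_Ioo
  refine mul_firstIntegral_le (A := 0.03522122) (E := 0.200183098) ?_ (by norm_num) ?_ ?_
  · calc _ = γm * marginalValue 4.8475 + 0.00520074 * actionValue B b 4.8475 := by
          linear_combination -actionValue B b 4.8475 * h.mul
      _ ≤ -0.518410096283 * marginalValue 4.8475 + 0.446687502 := by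
          gcongr
          · norm_num [marginalValue]
          · exact mul_actionValue_left_endpoint_le hb hB
      _ ≤ 0.03522122 := by norm_num [marginalValue]
  · calc exp (γm * (7.9503 - 4.8475)) ≤ exp (-1.608522846) := exp_le_exp.2 (by linarith)
      _ ≤ _ := exp_le_taylor_pow (n := 11) (k := 4) (by norm_num) (by norm_num)
        (by norm_num [abs_le])
      _ ≤ 0.200183098 := by norm_num [Finset.sum_range_succ, Nat.factorial, abs_of_nonneg]
  · norm_num [marginalValue]
    linarith [h.posRoot_mem_Ioo.2]

theorem IsCharRoots.le_negRoot_mul_firstIntegral (h : IsCharRoots 0.508378 0.00520074 γp γm)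
    (hb : b ∈ Ioo 4.18138 4.181381)
    (hB : 0.00520074 * B = 0.508378 * marginalValue b + 1 / b ^ 2) :
    firstIntegral γm γp marginalValue (fun y => 1 / y ^ 2) 7.9501 ≤
      γm * firstIntegral γm γp (actionValue B b) marginalValue 4.8499 := by
  obtain ⟨hm₀, hm₁⟩ := h.negRoot_mem_Ioo
  refine le_mul_firstIntegral (A := 0.03517816) (E := 0.200453098) ?_ (by norm_num) ?_ ?_
  · calc (0.03517816 : ℝ) ≤ -0.518410096284 * marginalValue 4.8499 + 0.446697390 := by
          norm_num [marginalValue]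
      _ ≤ γm * marginalValue 4.8499 + 0.00520074 * actionValue B b 4.8499 := by
          gcongr
          · norm_num [marginalValue]
          · exact le_mul_actionValue_right_endpoint hb hB
      _ = _ := by linear_combination actionValue B b 4.8499 * h.mul
  · calc (0.200453098 : ℝ) ≤ _ := by norm_num [Finset.sum_range_succ, Nat.factorial]
      _ ≤ exp (-1.607174981) := taylor_pow_le_exp (n := 12) (k := 4) (by norm_num) (by norm_num)
        (by norm_num [abs_le]) (by norm_num [Finset.sum_range_succ, Nat.factorial])
      _ ≤ _ := exp_le_exp.2 (by linarith)
  · norm_num [marginalValue]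
    linarith [h.posRoot_mem_Ioo.1]

/-- The solution is close to `(4.84887, 7.95018)`, where the two level curves have slopes
`0.013` and `-0.135`; this dictates the shape of the box. -/
theorem IsCharRoots.exists_thresholds (h : IsCharRoots 0.508378 0.00520074 γp γm)
    (hb : b ∈ Ioo 4.18138 4.181381)
    (hB : 0.00520074 * B = 0.508378 * marginalValue b + 1 / b ^ 2) :
    ∃ t ∈ Icc 4.8475 4.8499, ∃ l ∈ Icc 7.9501 7.9503,
      firstIntegral γp γm marginalValue (fun y => 1 / y ^ 2) l =
        γp * firstIntegral γp γm (actionValue B b) marginalValue t ∧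
      firstIntegral γm γp marginalValue (fun y => 1 / y ^ 2) l =
        γm * firstIntegral γm γp (actionValue B b) marginalValue t := by
  have hb₀ : b ≠ 0 := by linarith [hb.1]
  have hl₀ {x : ℝ} (hx : x ∈ Icc 7.9501 7.9503) : x ≠ 0 := by linarith [hx.1]
  have ht₀ {x : ℝ} (hx : x ∈ Icc 4.8475 4.8499) : x ≠ 0 := by linarith [hx.1]
  refine exists_firstIntegral_eq (f'' := fun x => -2 / x ^ 3) (g'' := fun x => 1 / x ^ 2)
    h.pos.le (by norm_num) (by norm_num)
    (fun x hx => hasDerivAt_marginalValue (hl₀ hx)) (fun x hx => hasDerivAt_one_div_sq (hl₀ hx))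
    (fun x hx => hasDerivAt_actionValue hb₀ (ht₀ hx))
    (fun x hx => hasDerivAt_marginalValue (ht₀ hx)) (fun x hx => ?_) (fun x hx => ?_)
    (h.posRoot_mul_firstIntegral_le hb hB) (h.le_posRoot_mul_firstIntegral hb hB)
    (h.negRoot_mul_firstIntegral_le hb hB) (h.le_negRoot_mul_firstIntegral hb hB)
  · rw [h.add, h.mul]
    linarith [marginalValue_residual_neg (x := x) (by linarith [hx.1])]
  · rw [h.add, h.mul]
    linarith [actionValue_residual_neg hb hB hx]

end Numerics

/-- For `σ = √2`, `μ = 0.508378`, `r = 0.00520074` and any `b₁ ∈ (4.18, 4.19)` solving the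
smooth-fit equation, there exist constants `C₁, C₂, D` and thresholds `θ ∈ (4.84, 4.85)`,
`λ ∈ (7.95, 7.96)` with `b₁ < θ < λ` satisfying the five matching equations. -/
theorem stmt12 (σ μ r : ℝ)
    (hσ : σ = Real.sqrt 2) (hμ : μ = 0.508378) (hr : r = 0.00520074)
    (γp γm : ℝ)
    (hγp : γp = (-μ + Real.sqrt (μ ^ 2 + 2 * r * σ ^ 2)) / σ ^ 2)
    (hγm : γm = (-μ - Real.sqrt (μ ^ 2 + 2 * r * σ ^ 2)) / σ ^ 2)
    (φ : ℝ → ℝ)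
    (hφ : ∀ x, φ x = Real.exp (γp * x) / γp - Real.exp (γm * x) / γm)
    (η : ℝ → ℝ)
    (hη : ∀ x, η x = if 0 < x then max (1 - 1 / x) 0 else 0)
    (b₁ A B : ℝ) (hb₁ : b₁ ∈ Set.Ioo (4.18 : ℝ) 4.19)
    (hA : A = η b₁ / deriv φ b₁) (hB : B = A * φ b₁)
    (hfit : b₁ ^ 2 - b₁ =
      (Real.exp (γp * b₁) - Real.exp (γm * b₁)) /
        (γp * Real.exp (γp * b₁) - γm * Real.exp (γm * b₁))) :
    ∃ C₁ C₂ D θ lam : ℝ,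
      b₁ < θ ∧ θ < lam ∧
      θ ∈ Set.Ioo (4.84 : ℝ) 4.85 ∧ lam ∈ Set.Ioo (7.95 : ℝ) 7.96 ∧
      C₁ * Real.exp (γp * θ) + C₂ * Real.exp (γm * θ) =
        B + θ - b₁ - Real.log (θ / b₁) ∧
      C₁ * γp * Real.exp (γp * θ) + C₂ * γm * Real.exp (γm * θ) = 1 - 1 / θ ∧
      C₁ * Real.exp (γp * lam) + C₂ * Real.exp (γm * lam) = D ∧
      C₁ * γp * Real.exp (γp * lam) + C₂ * γm * Real.exp (γm * lam) = 1 - 1 / lam ∧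
      C₁ * γp ^ 2 * Real.exp (γp * lam) + C₂ * γm ^ 2 * Real.exp (γm * lam) =
        1 / lam ^ 2 := by
  have hσ₂ : σ ^ 2 = 2 := hσ ▸ sq_sqrt zero_le_two
  have hr₀ : 0 < r := hr ▸ by norm_num
  have hroots : IsCharRoots μ r γp γm := by
    simpa [hγp, hγm, hσ₂] using isCharRoots_quadratic_formula (μ := μ) (σ := σ) (by simp [hσ]) hr₀
  have hb : 1 < b₁ := by linarith [hb₁.1]
  have hηb : η b₁ = marginalValue b₁ := by
    rw [hη, if_pos (by linarith), marginalValue, max_eq_left]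
    exact sub_nonneg.2 ((div_le_one (by linarith)).2 hb.le)
  have hrB : r * B = μ * marginalValue b₁ + 1 / b₁ ^ 2 := by
    rw [hB, hA, hηb, show φ = neumannSolution γp γm from funext hφ]
    exact hroots.mul_smoothFit_value hr₀ hb hfit
  have hne : γp ≠ γm := ((hroots.neg hr₀).trans hroots.pos).ne'
  subst hμ hr
  have hb' := hroots.smoothFit_root_mem_Ioo hb₁ hfit
  obtain ⟨θ, ⟨hθ₀, hθ₁⟩, l, ⟨hl₀, hl₁⟩, hp, hm⟩ := hroots.exists_thresholds hb' hrB
  obtain ⟨C₁, C₂, hv, hv', hw, hw'⟩ := exists_exp_combination_of_firstIntegral_eq hne hp hm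
  exact ⟨C₁, C₂, _, θ, l, by linarith [hb'.2], by linarith, ⟨by linarith, by linarith⟩,
    ⟨by linarith, by linarith⟩, hv, hv', rfl, hw, hw'⟩
end
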